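/- The terms with non-negative exponent of the Puiseux expansion at infinity of r₂(z) = p₂(ℓ(1/z)) depend only on the first 2·deg(p₁) + 1 terms of the Puiseux series ℓ(t); i.e., if ℓ and ℓ' are Puiseux series solutions of p(s) − t p₁₁(s) = 0 agreeing in their first 2·deg(p₁) + 1 terms, and both define branches of a curve without infinity points of the form (0:a:b:0), then the non-negative-exponent parts of p₂(ℓ(1/z)) and p₂(ℓ'(1/z)) coincide. -/

import Mathlib

open Polynomial

/-!
Write `v` for the `t`-adic valuation (`vt`) and `d = max (deg p₁₁) (deg p)`. Since `p(ℓ) ≠ 0`, the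
series `ℓ` is not a constant, and it has a local parameter `h` with `v h > 0`: `h = ℓ - c` for the
constant coefficient `c` if `v ℓ ≥ 0`, and `h = ℓ⁻¹` otherwise. In both cases the equation becomes
`h ^ e * P(h) = t * Q(h)` with `P(0), Q(0) ≠ 0` and `1 ≤ e ≤ d`, so `v h = 1 / e` (`ramification`).

The exponents of `h`, hence of `ℓ`, lie in `(1/e)ℤ` (`mem_grid_of_root`). Otherwise let `h₀` be the
part of `h` with exponents in `(1/e)ℤ` and `s ∉ (1/e)ℤ` the order of `h - h₀`. For
`g(x) = x ^ e * P(x) - t * Q(x)` the order of `g(h) - g(h₀) = -g(h₀)` is exactly `1 + s - 1/e`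
(`vt_rigid`), which is not in `(1/e)ℤ`, although `g(h₀)` only has exponents there.

Consequently (`branch_structure`) `v (ℓ - c) ≤ k / e` for every constant `c`, where `k = 1` and the
exponents of `ℓ` are `≥ 0` if `v ℓ ≥ 0`, whereas `k = -1` and `v ℓ = -1 / e` otherwise. At most
`2 * d` elements of `(1/e)ℤ` lie between the order of `ℓ` and `1 + k / e`, so agreement of
`2 * d + 1` terms forces `v (ℓ' - ℓ) > 1 + k / e`. Therefore `(ℓ' - c) / (ℓ - c) - 1` has
order `> 1` for every `c`. Factoring polynomials over `ℂ`, the same holds for `f(ℓ') / f(ℓ)` for every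
`f ≠ 0` (`close_aeval`), and so for `r₂' / r₂`. As `v r₂ ≥ -1`, the difference `r₂' - r₂` has
positive order.
-/

/-! ### The `t`-adic valuation -/

/-- The order of vanishing at `t = 0`, with value `⊤` at the zero series. -/
noncomputable def vt : AddValuation (HahnSeries ℚ ℂ) (WithTop ℚ) := HahnSeries.addVal ℚ ℂ

theorem vt_eq (x : HahnSeries ℚ ℂ) : vt x = x.orderTop := HahnSeries.addVal_apply

/-- The `ℂ`-algebra structure found by instance search on `HahnSeries ℚ ℂ` is the one through
power series; it embeds `ℂ` as constant series as expected. -/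
theorem algebraMap_eq_single (c : ℂ) : algebraMap ℂ (HahnSeries ℚ ℂ) c = HahnSeries.single 0 c := by
  rw [HahnSeries.algebraMap_apply']
  exact HahnSeries.ofPowerSeries_C c

theorem vt_const {c : ℂ} (hc : c ≠ 0) : vt (algebraMap ℂ (HahnSeries ℚ ℂ) c) = 0 := by
  rw [vt_eq, algebraMap_eq_single]
  exact HahnSeries.orderTop_single hc

theorem vt_const_nonneg (c : ℂ) : 0 ≤ vt (algebraMap ℂ (HahnSeries ℚ ℂ) c) := by
  rcases eq_or_ne c 0 with rfl | hc
  · simp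
  · exact (vt_const hc).ge

theorem vt_var : vt (HahnSeries.single (1 : ℚ) (1 : ℂ)) = 1 := by
  rw [vt_eq, HahnSeries.orderTop_single one_ne_zero]; rfl

theorem exists_vt {x : HahnSeries ℚ ℂ} (hx : x ≠ 0) : ∃ r : ℚ, vt x = r := by
  rw [vt_eq]
  exact ⟨_, (HahnSeries.order_eq_orderTop_of_ne_zero hx).symm⟩

theorem ne_zero_of_vt {x : HahnSeries ℚ ℂ} {r : ℚ} (hx : vt x = r) : x ≠ 0 := by
  rintro rfl
  simp at hx

theorem vt_aeval_nonneg {x : HahnSeries ℚ ℂ} (hx : 0 ≤ vt x) (P : ℂ[X]) : 0 ≤ vt (aeval x P) := by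
  induction P using Polynomial.induction_on' with
  | add p q hp hq => rw [map_add]; exact vt.map_le_add hp hq
  | monomial n a =>
    rw [aeval_monomial, vt.map_mul, vt.map_pow]
    exact add_nonneg (vt_const_nonneg a) (nsmul_nonneg hx n)

/-- Polynomial maps do not increase distances on the valuation ring. -/
theorem vt_aeval_sub {x y : HahnSeries ℚ ℂ} (hx : 0 ≤ vt x) (hy : 0 ≤ vt y) (P : ℂ[X]) :
    vt (x - y) ≤ vt (aeval x P - aeval y P) := by
  induction P using Polynomial.induction_on' with
  | add p q hp hq =>
    rw [map_add, map_add, add_sub_add_comm]; exact vt.map_le_add hp hq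
  | monomial n a =>
    rw [aeval_monomial, aeval_monomial, ← mul_sub, vt.map_mul]
    have h : vt (x - y) ≤ vt (x ^ n - y ^ n) := by
      induction n with
      | zero => simp
      | succ n ih =>
        have : x ^ (n + 1) - y ^ (n + 1) = x ^ n * (x - y) + (x ^ n - y ^ n) * y := by ring
        rw [this]
        refine vt.map_le_add ?_ ?_
        · rw [vt.map_mul, vt.map_pow]
          exact le_add_of_nonneg_left (nsmul_nonneg hx n)
        · rw [vt.map_mul]
          exact ih.trans (le_add_of_nonneg_right hy)
    exact h.trans (le_add_of_nonneg_left (vt_const_nonneg a))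

theorem vt_aeval_eq_zero {x : HahnSeries ℚ ℂ} (hx : 0 < vt x) {P : ℂ[X]} (hP : P.coeff 0 ≠ 0) :
    vt (aeval x P) = 0 := by
  have h := vt_aeval_sub hx.le (y := 0) (by simp) P
  have h0 : aeval (0 : HahnSeries ℚ ℂ) P = algebraMap ℂ (HahnSeries ℚ ℂ) (P.coeff 0) := by
    rw [← coeff_zero_eq_aeval_zero']
  rw [h0, sub_zero] at h
  rw [vt.map_eq_of_lt_sub, vt_const hP]
  rw [vt_const hP]
  exact hx.trans_le h

/-- If `x` and `y` have the same leading term, `x ^ e - y ^ e` has the order of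
`e * y ^ (e - 1) * (x - y)`; this uses characteristic zero. -/
theorem vt_pow_sub {x y : HahnSeries ℚ ℂ} {r s : ℚ} (hy : vt y = r) (hxy : vt (x - y) = s) (hrs : r < s)
    {e : ℕ} (he : e ≠ 0) : vt (x ^ e - y ^ e) = ((e * r + (s - r) : ℚ) : WithTop ℚ) := by
  have hy0 := ne_zero_of_vt hy
  obtain ⟨ε, hε⟩ : ∃ ε : HahnSeries ℚ ℂ, x - y = y * ε := ⟨(x - y) / y, by field_simp⟩
  have hε0 : ε ≠ 0 := by
    rintro rfl
    exact ne_zero_of_vt hxy (by simpa using hε)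
  obtain ⟨w, hw⟩ := exists_vt hε0
  have hws : r + w = s := by
    rw [hε, vt.map_mul, hy, hw] at hxy
    exact_mod_cast hxy
  have hx : x = y * (1 + ε) := by linear_combination hε
  let S : ℂ[X] := ∑ i ∈ Finset.range e, (1 + X) ^ i
  have hS : vt (aeval ε S) = 0 := by
    apply vt_aeval_eq_zero
    · rw [hw]; exact_mod_cast (by linarith)
    · simp [S, coeff_zero_eq_eval_zero, eval_finsetSum, he]
  have key : x ^ e - y ^ e = y ^ e * (aeval ε S * ε) := by
    have h1 : aeval ε S = ∑ i ∈ Finset.range e, (1 + ε) ^ i := by simp [S]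
    have h2 := geom_sum_mul (1 + ε) e
    rw [add_sub_cancel_left] at h2
    rw [h1, h2, hx, mul_pow]; ring
  rw [key, vt.map_mul, vt.map_mul, vt.map_pow, hS, hw, hy, zero_add, ← hws, ← WithTop.coe_nsmul,
    ← WithTop.coe_add]
  simp

/-- Let `g(x) = x ^ e * P(x) - t * Q(x)` with `P(0) ≠ 0`. If `x` and `y` have order `r = 1 / e` and
the same leading term, the order of `g x - g y` is that of the linear term
`e * y ^ (e - 1) * P(0) * (x - y)`. -/
theorem vt_rigid {x y : HahnSeries ℚ ℂ} {P Q : ℂ[X]} {e : ℕ} {r s : ℚ} (he : e ≠ 0) (hr : e * r = 1)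
    (hP : P.coeff 0 ≠ 0) (hy : vt y = r) (hxy : vt (x - y) = s) (hrs : r < s) :
    vt ((x ^ e * aeval x P - HahnSeries.single (1 : ℚ) (1 : ℂ) * aeval x Q) -
      (y ^ e * aeval y P - HahnSeries.single (1 : ℚ) (1 : ℂ) * aeval y Q)) =
      ((1 + (s - r) : ℚ) : WithTop ℚ) := by
  have hr0 : 0 < r := by
    have : (0 : ℚ) < e := by exact_mod_cast Nat.pos_of_ne_zero he
    by_contra h
    nlinarith
  have hx : vt x = r := by
    rw [← hy]; apply vt.map_eq_of_lt_sub
    rw [hy, hxy]; exact_mod_cast hrs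
  have hy0 : 0 < vt y := by rw [hy]; exact_mod_cast hr0
  have hx0 : 0 < vt x := by rw [hx]; exact_mod_cast hr0
  have h1 : vt ((x ^ e - y ^ e) * aeval x P) = ((1 + (s - r) : ℚ) : WithTop ℚ) := by
    rw [vt.map_mul, vt_pow_sub hy hxy hrs he, vt_aeval_eq_zero hx0 hP, hr, add_zero]
  have hlt : ((1 + (s - r) : ℚ) : WithTop ℚ) < ((1 + s : ℚ) : WithTop ℚ) := by
    exact_mod_cast (by linarith)
  have h2 : ((1 + s : ℚ) : WithTop ℚ) ≤ vt (y ^ e * (aeval x P - aeval y P)) := by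
    rw [vt.map_mul, vt.map_pow, hy, ← WithTop.coe_nsmul, nsmul_eq_mul, hr, WithTop.coe_add, ← hxy]
    gcongr
    exact vt_aeval_sub hx0.le hy0.le P
  have h3 : ((1 + s : ℚ) : WithTop ℚ) ≤
      vt (HahnSeries.single (1 : ℚ) (1 : ℂ) * (aeval x Q - aeval y Q)) := by
    rw [vt.map_mul, vt_var, WithTop.coe_add, ← hxy]
    exact add_le_add le_rfl (vt_aeval_sub hx0.le hy0.le Q)
  rw [← h1, ← vt.map_add_eq_of_lt_left (x := (x ^ e - y ^ e) * aeval x P)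
    (y := y ^ e * (aeval x P - aeval y P) -
      HahnSeries.single (1 : ℚ) (1 : ℂ) * (aeval x Q - aeval y Q))]
  · congr 1; ring
  · rw [h1]; exact hlt.trans_le (vt.map_le_sub h2 h3)

/-! ### Ramification -/

/-- The subfield `ℂ((t^{1/e}))` of series with exponents in `(1/e)ℤ`, as the image of the Laurent
series field under `u ↦ t^{1/e}`. -/
noncomputable def grid (e : ℕ) (he : e ≠ 0) : Subfield (HahnSeries ℚ ℂ) :=
  (HahnSeries.embDomainRingHom (Γ := ℤ) (Γ' := ℚ) (R := ℂ)
    ((AddMonoidHom.mulRight ((e : ℚ)⁻¹)).comp (Int.castAddHom ℚ))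
    (fun a b h => by simpa [he] using h)
    (fun a b => by
      have : (0 : ℚ) < (e : ℚ)⁻¹ := by positivity
      simp [this])).fieldRange

theorem mem_grid {e : ℕ} (he : e ≠ 0) {x : HahnSeries ℚ ℂ} :
    x ∈ grid e he ↔ ∀ a, x.coeff a ≠ 0 → ∃ n : ℤ, a = n / e := by
  have hpos : (0 : ℚ) < (e : ℚ)⁻¹ := by positivity
  constructor
  · rintro ⟨y, rfl⟩ a ha
    obtain ⟨n, -, hn⟩ := HahnSeries.support_embDomain_subset (HahnSeries.mem_support _ _ |>.2 ha)
    exact ⟨n, by rw [← hn]; simp [div_eq_mul_inv]⟩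
  · intro h
    let y : HahnSeries ℤ ℂ :=
      { coeff := fun n => x.coeff (n / e)
        isPWO_support' := by
          have hw := x.isWF_support
          apply Set.IsWF.isPWO
          rw [Set.isWF_iff_no_descending_seq] at hw ⊢
          intro f hf hmem
          refine hw (fun k => (f k : ℚ) / e) ?_ ?_
          · intro i j hij
            have := hf hij
            simp only [div_eq_mul_inv]
            exact mul_lt_mul_of_pos_right (by exact_mod_cast this) hpos
          · intro k
            exact hmem k }
    refine ⟨y, ?_⟩
    ext a
    by_cases ha : ∃ n : ℤ, a = n / e
    · obtain ⟨n, rfl⟩ := ha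
      have := HahnSeries.embDomain_coeff (f := ⟨⟨((AddMonoidHom.mulRight ((e : ℚ)⁻¹)).comp
        (Int.castAddHom ℚ)), fun a b h => by simpa [he] using h⟩, by simp [hpos]⟩) (x := y) (a := n)
      simp only [div_eq_mul_inv]
      refine Eq.trans this ?_
      simp [y, div_eq_mul_inv]
    · have h0 : x.coeff a = 0 := by
        by_contra hc; exact ha (h a hc)
      rw [h0]
      apply HahnSeries.embDomain_of_notMem_range
      rintro ⟨n, rfl⟩
      exact ha ⟨n, by simp [div_eq_mul_inv]⟩

theorem aeval_mem_grid {e : ℕ} (he : e ≠ 0) {x : HahnSeries ℚ ℂ} (hx : x ∈ grid e he) (P : ℂ[X]) :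
    aeval x P ∈ grid e he := by
  induction P using Polynomial.induction_on' with
  | add p q hp hq => rw [map_add]; exact add_mem hp hq
  | monomial n a =>
    rw [aeval_monomial]
    refine mul_mem ?_ (pow_mem hx n)
    rw [algebraMap_eq_single, mem_grid]
    intro b hb
    refine ⟨0, ?_⟩
    by_contra h
    exact hb (HahnSeries.coeff_single_of_ne (by simpa using h))

theorem var_mem_grid {e : ℕ} (he : e ≠ 0) :
    HahnSeries.single (1 : ℚ) (1 : ℂ) ∈ grid e he := by
  rw [mem_grid]
  intro b hb
  refine ⟨e, ?_⟩
  have : b = 1 := by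
    by_contra h
    exact hb (HahnSeries.coeff_single_of_ne h)
  rw [this]; field_simp; simp

/-- A root `h` of order `1 / e` of `h ^ e * P(h) = t * Q(h)` lies in `ℂ((t^{1/e}))`. -/
theorem mem_grid_of_root {h : HahnSeries ℚ ℂ} {P Q : ℂ[X]} {e : ℕ} {r : ℚ} (he : e ≠ 0) (hr : e * r = 1)
    (hP : P.coeff 0 ≠ 0) (hh : vt h = r)
    (hroot : h ^ e * aeval h P = HahnSeries.single (1 : ℚ) (1 : ℂ) * aeval h Q) :
    h ∈ grid e he := by
  classical
  by_contra hmem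
  have he' : (e : ℚ) ≠ 0 := by exact_mod_cast he
  have hr' : r = 1 / e := by field_simp; linarith
  -- The part of `h` with exponents in `(1/e)ℤ`.
  let h₀ : HahnSeries ℚ ℂ :=
    { coeff := fun a => if ∃ n : ℤ, a = n / e then h.coeff a else 0
      isPWO_support' := h.isPWO_support.mono (by
        intro a ha
        by_contra hc
        simp only [HahnSeries.mem_support, not_not] at hc
        simp [hc] at ha) }
  have hc₀ (a : ℚ) : h₀.coeff a = if ∃ n : ℤ, a = n / e then h.coeff a else 0 := rfl
  have h₀mem : h₀ ∈ grid e he := by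
    rw [mem_grid]
    intro a ha
    by_contra hc
    exact ha (by rw [hc₀, if_neg hc])
  have hne : h - h₀ ≠ 0 := fun hc => hmem (by rw [sub_eq_zero.1 hc]; exact h₀mem)
  obtain ⟨s, hs⟩ := exists_vt hne
  have hsc : (h - h₀).coeff s ≠ 0 := HahnSeries.coeff_orderTop_ne (by rw [← vt_eq, hs])
  have hsG : ¬ ∃ n : ℤ, s = n / e := fun hc => hsc (by
    rw [HahnSeries.coeff_sub, hc₀, if_pos hc, sub_self])
  rw [HahnSeries.coeff_sub, hc₀, if_neg hsG, sub_zero] at hsc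
  have hrs : r < s := by
    refine lt_of_le_of_ne ?_ ?_
    · have := HahnSeries.orderTop_le_of_coeff_ne_zero hsc
      rw [← vt_eq, hh] at this
      exact_mod_cast this
    · intro hc
      exact hsG ⟨1, by rw [← hc, hr']; simp⟩
  have hh₀ : vt h₀ = r := by
    rw [← hh]
    apply vt.map_eq_of_lt_sub
    rw [vt.map_sub_swap, hs, hh]
    exact_mod_cast hrs
  have hv := vt_rigid (Q := Q) he hr hP hh₀ hs hrs
  rw [hroot, sub_self, zero_sub, vt.map_neg, vt_eq] at hv
  have hgm : h₀ ^ e * aeval h₀ P - HahnSeries.single (1 : ℚ) (1 : ℂ) * aeval h₀ Q ∈ grid e he :=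
    sub_mem (mul_mem (pow_mem h₀mem e) (aeval_mem_grid he h₀mem P))
      (mul_mem (var_mem_grid he) (aeval_mem_grid he h₀mem Q))
  obtain ⟨n, hn⟩ := (mem_grid he).1 hgm _ (HahnSeries.coeff_orderTop_ne hv)
  refine hsG ⟨n + 1 - e, ?_⟩
  rw [hr'] at hn
  field_simp at hn ⊢
  push_cast
  linarith

/-- The equation of the curve in a local parameter `h` determines the ramification index `e`, the
order `1 / e` of `h` and the field `ℂ((t^{1/e}))` containing it. -/
theorem ramification {h : HahnSeries ℚ ℂ} {P Q : ℂ[X]} {a b : ℕ} (h0 : h ≠ 0) (hpos : 0 < vt h)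
    (hP : P.coeff 0 ≠ 0) (hQ : Q.coeff 0 ≠ 0)
    (hroot : h ^ a * aeval h P = HahnSeries.single (1 : ℚ) (1 : ℂ) * (h ^ b * aeval h Q)) :
    ∃ (e : ℕ) (he : e ≠ 0), e ≤ a ∧ vt h = ((1 / e : ℚ) : WithTop ℚ) ∧ h ∈ grid e he := by
  obtain ⟨r, hr⟩ := exists_vt h0
  have hr0 : 0 < r := by rw [hr] at hpos; exact_mod_cast hpos
  have hval := congrArg vt hroot
  rw [vt.map_mul, vt.map_mul, vt.map_mul, vt.map_pow, vt.map_pow, vt_aeval_eq_zero hpos hP,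
    vt_aeval_eq_zero hpos hQ, vt_var, hr, add_zero, add_zero, ← WithTop.coe_nsmul,
    ← WithTop.coe_nsmul, nsmul_eq_mul, nsmul_eq_mul, ← WithTop.coe_one, ← WithTop.coe_add,
    WithTop.coe_eq_coe] at hval
  have hab : b < a := by
    have : (b : ℚ) < a := by
      by_contra hc
      nlinarith
    exact_mod_cast this
  obtain ⟨e, rfl⟩ := Nat.exists_eq_add_of_lt hab
  have her : ((e + 1 : ℕ) : ℚ) * r = 1 := by push_cast at hval ⊢; linarith
  refine ⟨e + 1, by simp, by lia, ?_, ?_⟩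
  · rw [hr, WithTop.coe_eq_coe]
    rw [eq_div_iff (by positivity)]; linarith
  · refine mem_grid_of_root (P := P) (Q := Q) (by simp) her hP hr ?_
    apply mul_left_cancel₀ (pow_ne_zero b h0)
    linear_combination hroot

/-! ### Branches of the curve -/

/-- A branch `ℓ` has exponents in `(1/e)ℤ`, starting at `m / e` or later, and `ℓ - c` has order at
most `k / e` for all constants `c`; the number `e + k - m` of elements of `(1/e)ℤ` in
`[m / e, 1 + k / e)` is at most `2 * d`. -/
theorem branch_structure {p q : ℂ[X]} {ℓ : HahnSeries ℚ ℂ}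
    (hroot : aeval ℓ p = HahnSeries.single (1 : ℚ) (1 : ℂ) * aeval ℓ q) (hpe : aeval ℓ p ≠ 0) :
    ∃ (e : ℕ) (he : e ≠ 0) (m k : ℤ), ℓ ∈ grid e he ∧ ((m / e : ℚ) : WithTop ℚ) ≤ vt ℓ ∧
      (∀ c : ℂ, vt (ℓ - algebraMap ℂ (HahnSeries ℚ ℂ) c) ≤ ((k / e : ℚ) : WithTop ℚ)) ∧
      e + k - m ≤ 2 * max q.natDegree p.natDegree := by
  have hp : p ≠ 0 := by rintro rfl; simp at hpe
  have hq : q ≠ 0 := by rintro rfl; rw [hroot] at hpe; simp at hpe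
  by_cases hℓ : 0 ≤ vt ℓ
  · let c : ℂ := ℓ.coeff 0
    let h : HahnSeries ℚ ℂ := ℓ - algebraMap ℂ (HahnSeries ℚ ℂ) c
    have hpos : 0 < vt h := by
      have h1 : (0 : WithTop ℚ) ≤ vt h := vt.map_le_sub hℓ (vt_const_nonneg c)
      refine lt_of_le_of_ne h1 fun hc => ?_
      rw [vt_eq] at hc
      refine HahnSeries.coeff_orderTop_ne (g := 0) hc.symm ?_
      rw [HahnSeries.coeff_sub, algebraMap_eq_single, HahnSeries.coeff_single_same, sub_self]
    -- The Taylor expansion at `c`, with the power of `h` taken out.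
    have hexpand : ∀ f : ℂ[X], f ≠ 0 → ∃ (n : ℕ) (F : ℂ[X]), n ≤ f.natDegree ∧
        F.coeff 0 ≠ 0 ∧ aeval ℓ f = h ^ n * aeval h F := by
      intro f hf
      obtain ⟨g, hg, hdvd⟩ := f.exists_eq_pow_rootMultiplicity_mul_and_not_dvd hf c
      have hcomp : aeval ℓ g = aeval h (g.comp (X + C c)) := by
        rw [aeval_comp]; simp [h]
      refine ⟨f.rootMultiplicity c, g.comp (X + C c), ?_, ?_, ?_⟩
      · rw [← count_roots]
        exact (Multiset.count_le_card _ _).trans (card_roots' f)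
      · rw [coeff_zero_eq_eval_zero, eval_comp]
        rw [dvd_iff_isRoot, IsRoot.def] at hdvd
        simpa using hdvd
      · conv_lhs => rw [hg]
        rw [map_mul, map_pow, hcomp]; simp [h]
    obtain ⟨a, P, ha, hP, hpP⟩ := hexpand p hp
    obtain ⟨b, Q, hb, hQ, hqQ⟩ := hexpand q hq
    have h0 : h ≠ 0 := by
      intro hc
      -- For constant `ℓ` the equation would equate orders `0` and `1`.
      have hal : ℓ = algebraMap ℂ (HahnSeries ℚ ℂ) c := sub_eq_zero.1 hc
      rw [hal] at hpe hroot
      simp only [aeval_def, eval₂_at_apply] at hpe hroot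
      have h1 : p.eval c ≠ 0 := by rintro h; simp [h] at hpe
      have h2 : q.eval c ≠ 0 := by rintro h; rw [hroot] at hpe; simp [h] at hpe
      have := congrArg vt hroot
      rw [vt.map_mul, vt_const h1, vt_const h2, vt_var] at this
      simp at this
    rw [hpP, hqQ] at hroot
    obtain ⟨e, he, hea, hv, hmem⟩ := ramification h0 hpos hP hQ hroot
    refine ⟨e, he, 0, 1, ?_, by simpa using hℓ, ?_, ?_⟩
    · have : ℓ = aeval h (X + C c) := by simp [h]
      rw [this]; exact aeval_mem_grid he hmem _
    · intro c'
      have h1 : ((0 : ℚ) : WithTop ℚ) ≤ ((1 / e : ℚ) : WithTop ℚ) := by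
        rw [WithTop.coe_le_coe]; positivity
      rcases eq_or_ne c' c with rfl | hcc
      · rw [Int.cast_one]; exact hv.le
      · have : ℓ - algebraMap ℂ (HahnSeries ℚ ℂ) c' = h + algebraMap ℂ (HahnSeries ℚ ℂ) (c - c') := by simp [h]
        have hcv := vt_const (sub_ne_zero.2 hcc.symm)
        rw [this, vt.map_add_eq_of_lt_right (by rwa [hcv]), hcv, Int.cast_one]
        exact h1
    · have := le_max_right q.natDegree p.natDegree
      have : 1 ≤ e := Nat.pos_of_ne_zero he
      push_cast
      lia
  · -- At a pole of `ℓ` the local parameter is `ℓ⁻¹`, which exchanges `f` and `f.reverse`.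
    push Not at hℓ
    have hℓ0 : ℓ ≠ 0 := by rintro rfl; simp at hℓ
    obtain ⟨s, hs⟩ := exists_vt hℓ0
    have hs0 : s < 0 := by rw [hs] at hℓ; exact_mod_cast hℓ
    have hinv : vt ℓ⁻¹ = ((-s : ℚ) : WithTop ℚ) := by
      have := vt.map_mul ℓ ℓ⁻¹
      rw [mul_inv_cancel₀ hℓ0, vt.map_one, hs] at this
      obtain ⟨u, hu⟩ := exists_vt (inv_ne_zero hℓ0)
      rw [hu] at this ⊢
      have h' : 0 = s + u := by exact_mod_cast this
      rw [WithTop.coe_eq_coe]; linarith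
    have hpos : 0 < vt ℓ⁻¹ := by rw [hinv]; exact_mod_cast (by linarith)
    have hrev : ∀ f : ℂ[X], aeval ℓ⁻¹ f.reverse * ℓ ^ f.natDegree = aeval ℓ f := by
      intro f
      let := invertibleOfNonzero hℓ0
      have := eval₂_reverse_mul_pow (algebraMap ℂ (HahnSeries ℚ ℂ)) ℓ f
      rwa [invOf_eq_inv] at this
    have hr' : ℓ⁻¹ ^ q.natDegree * aeval ℓ⁻¹ p.reverse =
        HahnSeries.single (1 : ℚ) (1 : ℂ) * (ℓ⁻¹ ^ p.natDegree * aeval ℓ⁻¹ q.reverse) := by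
      rw [← hrev p, ← hrev q] at hroot
      rw [inv_pow, inv_pow]
      generalize aeval ℓ⁻¹ p.reverse = A at *
      generalize aeval ℓ⁻¹ q.reverse = B at *
      field_simp
      linear_combination hroot
    obtain ⟨e, he, hea, hv, hmem⟩ := ramification (inv_ne_zero hℓ0) hpos
      (by simpa using hp) (by simpa using hq) hr'
    have hse : s = -1 / e := by
      rw [hinv, WithTop.coe_eq_coe] at hv
      rw [neg_div]; linarith
    refine ⟨e, he, -1, -1, by simpa using inv_mem hmem, ?_, ?_, ?_⟩
    · rw [hs, hse]; simp
    · intro c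
      rw [vt.map_sub_eq_of_lt_left (hℓ.trans_le (vt_const_nonneg c)), hs, hse]; simp
    · have := le_max_left q.natDegree p.natDegree
      push_cast
      lia

/-! ### Closeness of values

The elements `z` with `1 < vt (z - 1)` form a group under multiplication. -/

theorem close_mul {z w : HahnSeries ℚ ℂ} (hz : 1 < vt (z - 1)) (hw : 1 < vt (w - 1)) :
    1 < vt (z * w - 1) := by
  have hw0 : vt w = 0 := by
    rw [← vt.map_one]; apply vt.map_eq_of_lt_sub
    rw [vt.map_one]; exact lt_trans (by simp) hw
  have : z * w - 1 = (z - 1) * w + (w - 1) := by ring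
  rw [this]
  refine vt.map_lt_add ?_ hw
  rwa [vt.map_mul, hw0, add_zero]

theorem close_inv {z : HahnSeries ℚ ℂ} (hz : 1 < vt (z - 1)) : 1 < vt (z⁻¹ - 1) := by
  have hv : vt z = 0 := by
    rw [← vt.map_one]; apply vt.map_eq_of_lt_sub
    rw [vt.map_one]; exact lt_trans (by simp) hz
  have h0 : z ≠ 0 := ne_zero_of_vt (r := 0) (by simpa using hv)
  have : z - 1 = -((z⁻¹ - 1) * z) := by field_simp; ring
  rw [this, vt.map_neg, vt.map_mul, hv, add_zero] at hz
  exact hz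

/-- If `ℓ'` is close to `ℓ` compared with the distance of `ℓ` to all constants, then the values
of any nonzero polynomial at `ℓ'` and `ℓ` have a quotient congruent to `1` beyond order `1`. -/
theorem close_aeval {ℓ ℓ' : HahnSeries ℚ ℂ} {k q : ℚ}
    (hℓ : ∀ c : ℂ, vt (ℓ - algebraMap ℂ (HahnSeries ℚ ℂ) c) ≤ (k : WithTop ℚ))
    (hq : (q : WithTop ℚ) ≤ vt (ℓ' - ℓ)) (hkq : 1 + k < q) {f : ℂ[X]} (hf : f ≠ 0) :
    1 < vt (aeval ℓ' f / aeval ℓ f - 1) := by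
  have hlin (c : ℂ) : 1 < vt (aeval ℓ' (X - C c) / aeval ℓ (X - C c) - 1) := by
    have hc := hℓ c
    simp only [map_sub, aeval_X, aeval_C]
    have h0 : ℓ - algebraMap ℂ (HahnSeries ℚ ℂ) c ≠ 0 := by
      intro h; rw [h, vt.map_zero] at hc; simp at hc
    obtain ⟨u, hu⟩ := exists_vt h0
    have huk : u ≤ k := by rw [hu] at hc; exact_mod_cast hc
    have h2 : ℓ' - ℓ = ((ℓ' - algebraMap ℂ (HahnSeries ℚ ℂ) c) / (ℓ - algebraMap ℂ (HahnSeries ℚ ℂ) c) - 1) *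
        (ℓ - algebraMap ℂ (HahnSeries ℚ ℂ) c) := by
      field_simp; ring
    rw [h2, vt.map_mul, hu] at hq
    by_contra hle
    push Not at hle
    have h3 := hq.trans (add_le_add_left hle (u : WithTop ℚ))
    have h4 : q ≤ 1 + u := by exact_mod_cast h3
    linarith
  have hconst : 1 < vt (aeval ℓ' (C f.leadingCoeff) / aeval ℓ (C f.leadingCoeff) - 1) := by
    rw [aeval_C, aeval_C, div_self (by simpa using hf)]
    simp
  have hprod (s : Multiset ℂ) : 1 < vt (aeval ℓ' (s.map fun c => X - C c).prod /
      aeval ℓ (s.map fun c => X - C c).prod - 1) := by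
    induction s using Multiset.induction_on with
    | empty => simp
    | cons c s ih =>
      rw [Multiset.map_cons, Multiset.prod_cons, map_mul, map_mul, mul_div_mul_comm]
      exact close_mul (hlin c) ih
  rw [(IsAlgClosed.splits f).eq_prod_roots, map_mul, map_mul, mul_div_mul_comm]
  exact close_mul hconst (hprod _)

/-- determinacy of the non-negative part of `r₂(z) = p₂(ℓ(1/z))`.
Puiseux series are modelled as elements of the Hahn series field `ℚ → ℂ`; the
variable is `t = single 1 1`. If `ℓ, ℓ'` are Puiseux solutions of
`p(s) − t·p₁₁(s) = 0` agreeing in their first `2·deg(p₁) + 1` lowest-order terms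
(`deg p₁ = max(deg p₁₁, deg p)`), whose associated branches `r₂ = p₂₁(ℓ)/p(ℓ)`
have no infinity point of type `(0:a:b:0)` (encoded as: no `t`-exponent below
`−1`, i.e. no `z`-exponent above `1`), then the terms of `r₂` and `r₂'` with
non-negative `z`-exponent (non-positive `t`-exponent) coincide. -/
theorem stmt16 (p p₁₁ p₂₁ : Polynomial ℂ) (ℓ ℓ' : HahnSeries ℚ ℂ)
    (hroot : aeval ℓ p = HahnSeries.single (1 : ℚ) (1 : ℂ) * aeval ℓ p₁₁)
    (hroot' : aeval ℓ' p = HahnSeries.single (1 : ℚ) (1 : ℂ) * aeval ℓ' p₁₁)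
    (hpe : aeval ℓ p ≠ 0) (hpe' : aeval ℓ' p ≠ 0)
    (hagree : ∃ q : ℚ, (∀ x < q, ℓ.coeff x = ℓ'.coeff x) ∧
      2 * max p₁₁.natDegree p.natDegree + 1 ≤ (ℓ.support ∩ Set.Iio q).ncard)
    (hbr : ∀ x < (-1 : ℚ), (aeval ℓ p₂₁ / aeval ℓ p).coeff x = 0)
    (hbr' : ∀ x < (-1 : ℚ), (aeval ℓ' p₂₁ / aeval ℓ' p).coeff x = 0) :
    ∀ x ≤ (0 : ℚ), (aeval ℓ p₂₁ / aeval ℓ p).coeff x =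
      (aeval ℓ' p₂₁ / aeval ℓ' p).coeff x := by
  obtain ⟨q, hq, hcard⟩ := hagree
  obtain ⟨e, he, m, k, hgrid, hm, hk, hcount⟩ := branch_structure hroot hpe
  have he0 : (0 : ℚ) < e := by exact_mod_cast Nat.pos_of_ne_zero he
  -- Otherwise the agreeing terms would be too few.
  have hkq : 1 + (k / e : ℚ) < q := by
    by_contra! hle
    have hsub : ℓ.support ∩ Set.Iio q ⊆
        ((Finset.Ico m (e + k)).image fun n : ℤ => (n / e : ℚ) : Finset ℚ) := by
      rintro x ⟨hx, hxq⟩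
      obtain ⟨n, rfl⟩ := (mem_grid he).1 hgrid x hx
      rw [Finset.coe_image]
      refine ⟨n, ?_, rfl⟩
      rw [Finset.coe_Ico, Set.mem_Ico]
      constructor
      · have h1 := hm.trans ((vt_eq ℓ).le.trans (HahnSeries.orderTop_le_of_coeff_ne_zero hx))
        rw [WithTop.coe_le_coe, div_le_div_iff_of_pos_right he0] at h1
        exact_mod_cast h1
      · have h1 : (n / e : ℚ) < 1 + k / e := lt_of_lt_of_le hxq hle
        have h2 : (n : ℚ) < e + k := by
          field_simp at h1
          exact h1
        exact_mod_cast h2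
    have h1 := Set.ncard_le_ncard hsub (Finset.finite_toSet _)
    rw [Set.ncard_coe_finset] at h1
    have h2 := h1.trans Finset.card_image_le
    rw [Int.card_Ico] at h2
    lia
  have hδ : (q : WithTop ℚ) ≤ vt (ℓ' - ℓ) := by
    rw [vt_eq, HahnSeries.le_orderTop_iff_forall]
    intro x hx
    rw [HahnSeries.coeff_sub, hq x (by exact_mod_cast hx), sub_self]
  rcases eq_or_ne p₂₁ 0 with rfl | hp₂
  · simp
  have hp : p ≠ 0 := by rintro rfl; simp at hpe
  have hu := close_mul (close_aeval hk hδ hkq hp₂) (close_inv (close_aeval hk hδ hkq hp))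
  have h2 : (-1 : ℚ) ≤ vt (aeval ℓ p₂₁ / aeval ℓ p) := by
    rw [vt_eq, HahnSeries.le_orderTop_iff_forall]
    intro x hx
    exact hbr x (by exact_mod_cast hx)
  intro x hx
  have hne : aeval ℓ p₂₁ ≠ 0 := by
    intro h
    have := close_aeval hk hδ hkq hp₂
    rw [h, div_zero, zero_sub, vt.map_neg, vt.map_one] at this
    exact absurd this (by simp)
  have key : aeval ℓ' p₂₁ / aeval ℓ' p - aeval ℓ p₂₁ / aeval ℓ p = aeval ℓ p₂₁ / aeval ℓ p *
      (aeval ℓ' p₂₁ / aeval ℓ p₂₁ * (aeval ℓ' p / aeval ℓ p)⁻¹ - 1) := by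
    field_simp
  have h3 : ((0 : ℚ) : WithTop ℚ) < vt (aeval ℓ' p₂₁ / aeval ℓ' p - aeval ℓ p₂₁ / aeval ℓ p) := by
    rw [key, vt.map_mul]
    have := WithTop.add_lt_add_of_le_of_lt (WithTop.coe_ne_top (a := (-1 : ℚ))) h2 hu
    refine lt_of_eq_of_lt ?_ this
    exact_mod_cast (by norm_num : (0 : ℚ) = -1 + 1)
  have h4 := HahnSeries.coeff_eq_zero_of_lt_orderTop (i := x)
    (x := aeval ℓ' p₂₁ / aeval ℓ' p - aeval ℓ p₂₁ / aeval ℓ p)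
    (by rw [← vt_eq]; exact lt_of_le_of_lt (by exact_mod_cast hx) h3)
  rw [HahnSeries.coeff_sub, sub_eq_zero] at h4
  exact h4.symm
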